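/- Suppose Z, X, U, W are (closed, infinite dimensional) subspaces of X_p with Z ⊆ X = U ⊕ W, U isomorphic to ℓ_2, and W isomorphic to ℓ_p. Suppose Z has a normalized K-unconditional basis (z_n), the limit β = lim_{n→∞} r(z_n) exists, and β' = lim_{n→∞} inf{ b : for every ε > 0 there exists u ∈ U with ‖P_n u‖ < ε and r(u) ≤ b } exists, where P_n is the basis projection of X_p onto the span of the first n natural basis vectors. If β > 0, β' ≤ 1, and P is a bounded projection from X onto Z, then ‖P‖ ≥ β'/(Kβ). -/

import Mathlib

open scoped ENNReal

noncomputable section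

/-- The sequence space `ℓ_p` (of real sequences), for a real exponent `p`. -/
abbrev SeqP (p : ℝ) := lp (fun _ : ℕ => ℝ) (ENNReal.ofReal p)

/-- The sequence space `ℓ_2` (of real sequences). -/
abbrev Seq2 := lp (fun _ : ℕ => ℝ) 2

/-- The space `X_{p,w}`, realized as the submodule of `ℓ_p ⊕_∞ ℓ_2` consisting of the
pairs `(x, y)` with `y n = w n * x n`.  Since the norm on the product is the maximum of
the two norms, this is exactly the completion of the finitely supported sequences under
`‖a‖ = max {|a|_p, |a|_{2,w}}`, the element with coordinates `a` being identified with
the pair `(a, w·a)`. -/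
def XpwMod (p : ℝ) (w : ℕ → ℝ) : Submodule ℝ (SeqP p × Seq2) where
  carrier := {z | ∀ n, (z.2 : ℕ → ℝ) n = w n * (z.1 : ℕ → ℝ) n}
  add_mem' := by
    intro a b ha hb n
    simp only [Prod.fst_add, Prod.snd_add, lp.coeFn_add, Pi.add_apply, ha n, hb n]
    ring
  zero_mem' := by
    intro n
    simp
  smul_mem' := by
    intro c a ha n
    simp only [Prod.smul_fst, Prod.smul_snd, lp.coeFn_smul, Pi.smul_apply, ha n,
      smul_eq_mul]
    ring

/-- The space `X_{p,w}` with its natural norm `‖a‖ = max {|a|_p, |a|_{2,w}}`. -/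
def Xpw (p : ℝ) (w : ℕ → ℝ) : Type := ↥(XpwMod p w)

variable {p : ℝ} {w : ℕ → ℝ}

instance [Fact (1 ≤ ENNReal.ofReal p)] : NormedAddCommGroup (Xpw p w) :=
  inferInstanceAs (NormedAddCommGroup ↥(XpwMod p w))

instance [Fact (1 ≤ ENNReal.ofReal p)] : NormedSpace ℝ (Xpw p w) :=
  inferInstanceAs (NormedSpace ℝ ↥(XpwMod p w))

/-- The pair of coordinates (in `ℓ_p` and in weighted `ℓ_2`) of an element of `X_{p,w}`. -/
def Xpw.pair (x : Xpw p w) : SeqP p × Seq2 := (show ↥(XpwMod p w) from x).val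

/-- The underlying sequence of coordinates of an element of `X_{p,w}`. -/
def seq (x : Xpw p w) : ℕ → ℝ := (Xpw.pair x).1

/-- `|x|_p` for `x ∈ X_{p,w}`. -/
def nrmP (x : Xpw p w) : ℝ := ‖(Xpw.pair x).1‖

/-- `|x|_2 = |x|_{2,w}` for `x ∈ X_{p,w}`. -/
def nrm2 (x : Xpw p w) : ℝ := ‖(Xpw.pair x).2‖

/-- The ratio `r(x) = |x|_2 / |x|_p`. -/
def ratio (x : Xpw p w) : ℝ := nrm2 x / nrmP x

/-- `ω(E) = ∑_{n ∈ E} w_n^{2p/(p-2)}`. -/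
def omegaE (p : ℝ) (w : ℕ → ℝ) (E : Set ℕ) : ℝ :=
  ∑' n : E, w (n : ℕ) ^ (2 * p / (p - 2))

/-- The pairing `⟨x, y⟩ = ∑_n x_n y_n w_n²`. -/
def pairW (w : ℕ → ℝ) (x y : Xpw p w) : ℝ :=
  ∑' n, seq x n * seq y n * w n ^ 2

/-- `w` is a weight sequence suitable for Rosenthal's space `X_p`: it is positive and for
every `ε > 0`, `∑_{w_n < ε} w_n^{2p/(p-2)} = ∞`. -/
def IsXpWeight (p : ℝ) (w : ℕ → ℝ) : Prop :=
  (∀ n, 0 < w n) ∧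
    ∀ ε : ℝ, 0 < ε →
      (∑' n : {n : ℕ | w n < ε}, ENNReal.ofReal (w (n : ℕ) ^ (2 * p / (p - 2)))) = ⊤

theorem memℓp_indicator {q : ℝ≥0∞} (E : Set ℕ) {f : ℕ → ℝ} (hf : Memℓp f q) :
    Memℓp (E.indicator f) q := by
  rcases ENNReal.trichotomy q with hq | hq | hq
  · subst hq
    refine memℓp_zero ((memℓp_zero_iff.mp hf).subset ?_)
    intro i hi
    simp only [Set.mem_setOf_eq] at hi ⊢
    intro h
    exact hi (by simp [Set.indicator_apply, h])
  · subst hq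
    obtain ⟨C, hC⟩ := (memℓp_infty_iff.mp hf)
    refine memℓp_infty ⟨C, ?_⟩
    rintro x ⟨i, rfl⟩
    exact le_trans (norm_indicator_le_norm_self f i) (hC ⟨i, rfl⟩)
  · refine memℓp_gen (Summable.of_nonneg_of_le (fun i => ?_) (fun i => ?_)
      (hf.summable hq))
    · positivity
    · exact Real.rpow_le_rpow (norm_nonneg _) (norm_indicator_le_norm_self f i) hq.le

/-- The restriction `x ↦ x_{|E}` of elements of `X_{p,w}` to a set `E` of coordinates. -/
def restrict (E : Set ℕ) (x : Xpw p w) : Xpw p w :=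
  show ↥(XpwMod p w) from
  ⟨(⟨E.indicator ((Xpw.pair x).1 : ℕ → ℝ), memℓp_indicator E (lp.memℓp (Xpw.pair x).1)⟩,
    ⟨E.indicator ((Xpw.pair x).2 : ℕ → ℝ), memℓp_indicator E (lp.memℓp (Xpw.pair x).2)⟩), by
    intro n
    by_cases hn : n ∈ E
    · have h : ((Xpw.pair x).2 : ℕ → ℝ) n = w n * ((Xpw.pair x).1 : ℕ → ℝ) n :=
        (show ↥(XpwMod p w) from x).2 n
      simpa [Set.indicator_of_mem hn] using h
    · simp [Set.indicator_of_notMem hn]⟩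

/-!
Write `z n = u n + v n` along `X = U ⊕ W`. An unconditional basic sequence that is not weakly null
contains `ℓ_1`, which Clarkson's inequality excludes in `X_{p,w}`; so `v n` tends weakly to `0`, and
by Pitt's theorem (`2 < p`) every bounded operator from `W ≃ ℓ_p` to a Hilbert space sends `v n` to
a norm null sequence. Let `g n` be the functionals biorthogonal to `z n`. Averaging over signs in
`ℓ_2`, unconditionality makes `x ↦ (g n (P x) * |z n|_2)_n` a bounded operator into `ℓ_2`, so
`g n (P (v n)) * |z n|_2` tends to `0`. Hence `1 = g n (P (z n))` is asymptotically carried by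
`g n (P (u n)) ≤ K * ‖P‖ * ‖u n‖`, while `β' * ‖u n‖ ≤ |u n|_2`, and `|u n|_2` has the same limit
`min 1 β` as `|z n|_2`.
-/

open Filter Topology

section SignedSums

variable {ι E : Type*} [AddCommGroup E] [Module ℝ E] {z : ι → E} {s t : Finset ι} {x y : E}

/-- The sums `∑ i ∈ s, ± z i`. The choices of signs are encoded as the real-valued functions
with values in `{1, -1}`. -/
def signedSums (z : ι → E) (s : Finset ι) : Set E :=
  {y | ∃ θ : ι → ℝ, (∀ i, θ i = 1 ∨ θ i = -1) ∧ ∑ i ∈ s, θ i • z i = y}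

theorem sum_mem_signedSums (z : ι → E) (s : Finset ι) : ∑ i ∈ s, z i ∈ signedSums z s :=
  ⟨fun _ => 1, fun _ => .inl rfl, by simp only [one_smul]⟩

theorem neg_mem_signedSums (hx : x ∈ signedSums z s) : -x ∈ signedSums z s := by
  obtain ⟨θ, hθ, rfl⟩ := hx
  exact ⟨-θ, fun i => by rcases hθ i with h | h <;> simp [h], by simp⟩

theorem add_mem_signedSums [DecidableEq ι] (hst : Disjoint s t) (hx : x ∈ signedSums z s)
    (hy : y ∈ signedSums z t) : x + y ∈ signedSums z (s ∪ t) := by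
  obtain ⟨θ, hθ, rfl⟩ := hx
  obtain ⟨ψ, hψ, rfl⟩ := hy
  refine ⟨s.piecewise θ ψ, fun i => s.piecewise_cases θ ψ (fun c => c = 1 ∨ c = -1) (hθ i) (hψ i),
    ?_⟩
  rw [Finset.sum_union hst]
  congr 1
  · exact Finset.sum_congr rfl fun i hi => by rw [s.piecewise_eq_of_mem _ _ hi]
  · refine Finset.sum_congr rfl fun i hi => ?_
    rw [s.piecewise_eq_of_notMem _ _ (Finset.disjoint_right.mp hst hi)]

theorem sub_mem_signedSums [DecidableEq ι] (hst : Disjoint s t) (hx : x ∈ signedSums z s)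
    (hy : y ∈ signedSums z t) : x - y ∈ signedSums z (s ∪ t) :=
  sub_eq_add_neg x y ▸ add_mem_signedSums hst hx (neg_mem_signedSums hy)

theorem exists_mem_signedSums_map_eq {F : Type*} [AddCommGroup F] [Module ℝ F] (f : E →ₗ[ℝ] F)
    {y : F} (hy : y ∈ signedSums (fun i => f (z i)) s) : ∃ x ∈ signedSums z s, f x = y := by
  obtain ⟨θ, hθ, rfl⟩ := hy
  exact ⟨_, ⟨θ, hθ, rfl⟩, by simp⟩

theorem exists_mem_signedSums_eq_sum_abs (f : E →ₗ[ℝ] ℝ) (z : ι → E) (s : Finset ι) :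
    ∃ y ∈ signedSums z s, f y = ∑ i ∈ s, |f (z i)| := by
  refine ⟨_, ⟨fun i => if 0 ≤ f (z i) then 1 else -1, fun i => by grind, rfl⟩, ?_⟩
  rw [map_sum]
  refine Finset.sum_congr rfl fun i _ => ?_
  beta_reduce
  split_ifs with h
  · simp [abs_of_nonneg h]
  · simp [abs_of_neg (not_le.mp h)]

end SignedSums

section Hilbert

variable {ι H : Type*} [NormedAddCommGroup H] [InnerProductSpace ℝ H]

theorem norm_sq_add_norm_sq_le_or (x y : H) :
    ‖x‖ ^ 2 + ‖y‖ ^ 2 ≤ ‖x + y‖ ^ 2 ∨ ‖x‖ ^ 2 + ‖y‖ ^ 2 ≤ ‖x - y‖ ^ 2 := by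
  have h := parallelogram_law_with_norm ℝ x y
  by_contra! hlt
  nlinarith

theorem exists_mem_signedSums_sum_norm_sq_le (x : ι → H) (s : Finset ι) :
    ∃ y ∈ signedSums x s, ∑ i ∈ s, ‖x i‖ ^ 2 ≤ ‖y‖ ^ 2 := by
  classical
  induction s using Finset.induction_on with
  | empty => exact ⟨0, by simpa using sum_mem_signedSums x ∅, by simp⟩
  | insert i s hi ih =>
    obtain ⟨y, hy, hle⟩ := ih
    have hxi : x i ∈ signedSums x {i} := by simpa using sum_mem_signedSums x {i}
    have hdisj : Disjoint {i} s := Finset.disjoint_singleton_left.mpr hi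
    rw [Finset.insert_eq, Finset.sum_union hdisj, Finset.sum_singleton]
    rcases norm_sq_add_norm_sq_le_or (x i) y with h | h
    · exact ⟨_, add_mem_signedSums hdisj hxi hy, by linarith⟩
    · exact ⟨_, sub_mem_signedSums hdisj hxi hy, by linarith⟩

end Hilbert

section Unconditional

variable {ι E H : Type*} [NormedAddCommGroup E] [NormedSpace ℝ E] [NormedAddCommGroup H]
  [InnerProductSpace ℝ H] {K : ℝ} {z : ι → E}

/-- `z` is a `K`-unconditional family: changing the signs of the coefficients of a finite linear
combination increases its norm by a factor at most `K`. -/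
def IsUnconditional (K : ℝ) (z : ι → E) : Prop :=
  ∀ a θ : ι → ℝ, (∀ i, θ i = 1 ∨ θ i = -1) → ∀ s : Finset ι,
    ‖∑ i ∈ s, (θ i * a i) • z i‖ ≤ K * ‖∑ i ∈ s, a i • z i‖

namespace IsUnconditional

theorem of_comp_linearIsometry {F : Type*} [NormedAddCommGroup F] [NormedSpace ℝ F]
    (L : E →ₗᵢ[ℝ] F) (h : IsUnconditional K fun i => L (z i)) : IsUnconditional K z := by
  intro a θ hθ s
  simpa only [← map_smul, ← map_sum, L.norm_map] using h a θ hθ s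

theorem smul (h : IsUnconditional K z) (a : ι → ℝ) : IsUnconditional K fun i => a i • z i := by
  intro b θ hθ s
  simpa only [mul_smul] using h (fun i => b i * a i) θ hθ s

theorem norm_le_of_mem_signedSums (h : IsUnconditional K z) {s : Finset ι} {x y : E}
    (hx : x ∈ signedSums z s) (hy : y ∈ signedSums z s) : ‖x‖ ≤ K * ‖y‖ := by
  obtain ⟨θ, hθ, rfl⟩ := hx
  obtain ⟨ψ, hψ, rfl⟩ := hy
  have hsq (i : ι) : ψ i * ψ i = 1 := by rcases hψ i with hi | hi <;> simp [hi]
  have := h ψ (fun i => θ i * ψ i)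
    (fun i => by rcases hθ i with hi | hi <;> rcases hψ i with hi' | hi' <;> simp [hi, hi']) s
  simpa only [mul_assoc, hsq, mul_one] using this

theorem one_le (h : IsUnconditional K z) {i : ι} (hi : z i ≠ 0) : 1 ≤ K := by
  have := h 1 1 (fun _ => .inl rfl) {i}
  rw [Finset.sum_singleton, Finset.sum_singleton] at this
  simpa using le_of_mul_le_mul_right (by simpa using this) (norm_pos_iff.mpr hi)

theorem norm_le_norm_sum (h : IsUnconditional K z) {s : Finset ι} {i : ι} (hi : i ∈ s) :
    ‖z i‖ ≤ K * ‖∑ j ∈ s, z j‖ := by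
  classical
  have hdisj : Disjoint {i} (s.erase i) := by simp
  have hs : {i} ∪ s.erase i = s := by rw [← Finset.insert_eq, Finset.insert_erase hi]
  have hsum := sum_mem_signedSums z
  have hadd := add_mem_signedSums hdisj (hsum _) (hsum _)
  have hsub := sub_mem_signedSums hdisj (hsum _) (hsum _)
  rw [hs, Finset.sum_singleton] at hadd hsub
  set y := ∑ j ∈ s.erase i, z j
  calc ‖z i‖ = ‖(2 : ℝ)⁻¹ • ((z i + y) + (z i - y))‖ := by congr 1; module
    _ ≤ 2⁻¹ * (‖z i + y‖ + ‖z i - y‖) := by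
        rw [norm_smul, Real.norm_of_nonneg (by norm_num)]
        gcongr
        exact norm_add_le _ _
    _ ≤ K * ‖∑ j ∈ s, z j‖ := by
        linarith [h.norm_le_of_mem_signedSums hadd (hsum s),
          h.norm_le_of_mem_signedSums hsub (hsum s)]

theorem linearIndependent (h : IsUnconditional K z) (hz : ∀ i, z i ≠ 0) :
    LinearIndependent ℝ z := by
  refine linearIndependent_iff'.mpr fun s a ha i hi => ?_
  have := (h.smul a).norm_le_norm_sum hi
  rw [ha, norm_zero, mul_zero, norm_le_zero_iff] at this
  exact (smul_eq_zero.mp this).resolve_right (hz i)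

theorem exists_dual (h : IsUnconditional K z) (hz : ∀ i, ‖z i‖ = 1) (i : ι) :
    ∃ g : E →L[ℝ] ℝ, g (z i) = 1 ∧ (∀ j, j ≠ i → g (z j) = 0) ∧ ‖g‖ ≤ K := by
  have hz0 (j : ι) : z j ≠ 0 := norm_ne_zero_iff.mp (by simp [hz j])
  have hK : 0 ≤ K := zero_le_one.trans (h.one_le (hz0 i))
  set B := Module.Basis.span (h.linearIndependent hz0)
  have hB (j : ι) : (B j : E) = z j := congrArg Subtype.val (Module.Basis.span_apply _ j)
  have hbound (y : Submodule.span ℝ (Set.range z)) : ‖B.coord i y‖ ≤ K * ‖y‖ := by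
    by_cases hi : i ∈ (B.repr y).support
    · have hy : (y : E) = ∑ j ∈ (B.repr y).support, B.repr y j • z j := by
        conv_lhs => rw [← B.linearCombination_repr y, Finsupp.linearCombination_apply, Finsupp.sum]
        simp only [Submodule.coe_sum, Submodule.coe_smul, hB]
      have := (h.smul (B.repr y)).norm_le_norm_sum hi
      rwa [norm_smul, hz i, mul_one, ← hy] at this
    · rw [B.coord_apply, Finsupp.notMem_support_iff.mp hi, norm_zero]
      positivity
  obtain ⟨g, hg, hnorm⟩ := exists_extension_norm_eq (Submodule.span ℝ (Set.range z))
    ((B.coord i).mkContinuous K hbound)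
  have hgz (j : ι) : g (z j) = B.coord i (B j) := hB j ▸ hg (B j)
  refine ⟨g, by simp [hgz], fun j hj => by simp [hgz, hj], ?_⟩
  exact hnorm ▸ LinearMap.mkContinuous_norm_le _ hK _

theorem sum_norm_sq_le (h : IsUnconditional K z) (J : E →L[ℝ] H) (s : Finset ι) :
    ∑ i ∈ s, ‖J (z i)‖ ^ 2 ≤ (‖J‖ * K * ‖∑ i ∈ s, z i‖) ^ 2 := by
  obtain ⟨v, hv, hle⟩ := exists_mem_signedSums_sum_norm_sq_le (fun i => J (z i)) s
  obtain ⟨y, hy, rfl⟩ := exists_mem_signedSums_map_eq (J : E →ₗ[ℝ] H) hv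
  refine hle.trans (pow_le_pow_left₀ (norm_nonneg _) ?_ 2)
  calc ‖J y‖ ≤ ‖J‖ * ‖y‖ := J.le_opNorm y
    _ ≤ ‖J‖ * (K * ‖∑ i ∈ s, z i‖) := by
        gcongr
        exact h.norm_le_of_mem_signedSums hy (sum_mem_signedSums z s)
    _ = ‖J‖ * K * ‖∑ i ∈ s, z i‖ := (mul_assoc _ _ _).symm

theorem sum_dual_sq_mul_norm_sq_le (h : IsUnconditional K z) (J : E →L[ℝ] H) {g : ι → E →L[ℝ] ℝ}
    (hg : ∀ i, g i (z i) = 1) (hg' : ∀ i j, j ≠ i → g i (z j) = 0) (s : Finset ι) {y : E}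
    (hy : y ∈ (Submodule.span ℝ (Set.range z)).topologicalClosure) :
    ∑ i ∈ s, (g i y * ‖J (z i)‖) ^ 2 ≤ (‖J‖ * K * ‖y‖) ^ 2 := by
  classical
  have hclosed : IsClosed
      {y : E | ∑ i ∈ s, (g i y * ‖J (z i)‖) ^ 2 ≤ (‖J‖ * K * ‖y‖) ^ 2} :=
    isClosed_le (by fun_prop) (by fun_prop)
  refine closure_minimal (fun y hy => ?_) hclosed hy
  obtain ⟨c, rfl⟩ := Finsupp.mem_span_range_iff_exists_finsupp.mp hy
  have hsum : c.sum (fun i a => a • z i) = ∑ i ∈ c.support ∪ s, c i • z i :=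
    Finsupp.sum_of_support_subset _ Finset.subset_union_left _ (by simp)
  have hgc (i : ι) (hi : i ∈ s) : g i (∑ j ∈ c.support ∪ s, c j • z j) = c i := by
    rw [map_sum, Finset.sum_eq_single_of_mem i (Finset.mem_union_right _ hi)
      fun j _ hj => by rw [map_smul, hg' i j hj, smul_zero]]
    rw [map_smul, hg, smul_eq_mul, mul_one]
  rw [Set.mem_ofPred_eq, hsum]
  calc ∑ i ∈ s, (g i (∑ j ∈ c.support ∪ s, c j • z j) * ‖J (z i)‖) ^ 2
      = ∑ i ∈ s, ‖J (c i • z i)‖ ^ 2 := Finset.sum_congr rfl fun i hi => by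
        rw [hgc i hi, map_smul, norm_smul, mul_pow, mul_pow, Real.norm_eq_abs, sq_abs]
    _ ≤ ∑ i ∈ c.support ∪ s, ‖J (c i • z i)‖ ^ 2 :=
        Finset.sum_le_sum_of_subset_of_nonneg Finset.subset_union_right fun _ _ _ => by positivity
    _ ≤ _ := (h.smul c).sum_norm_sq_le J _

end IsUnconditional

end Unconditional

section Lp2

variable {ι E : Type*} [NormedAddCommGroup E] [NormedSpace ℝ E]

theorem exists_clm_lp_two {g : ι → E →L[ℝ] ℝ} {C : ℝ} (hC : 0 ≤ C)
    (hg : ∀ (y : E) (s : Finset ι), ∑ i ∈ s, g i y ^ 2 ≤ (C * ‖y‖) ^ 2) :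
    ∃ T : E →L[ℝ] lp (fun _ : ι => ℝ) 2, ∀ y i, T y i = g i y := by
  have hg' (y : E) (s : Finset ι) :
      ∑ i ∈ s, ‖g i y‖ ^ (2 : ℝ≥0∞).toReal ≤ (C * ‖y‖) ^ (2 : ℝ≥0∞).toReal := by
    simpa using hg y s
  let T : E →ₗ[ℝ] lp (fun _ : ι => ℝ) 2 :=
    { toFun := fun y => ⟨fun i => g i y, memℓp_gen' (hg' y)⟩
      map_add' := fun x y => lp.ext (funext fun i => map_add (g i) x y)
      map_smul' := fun c y => lp.ext (funext fun i => map_smul (g i) c y) }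
  exact ⟨T.mkContinuous C fun y => lp.norm_le_of_forall_sum_le (by norm_num) (by positivity)
    (hg' y), fun _ _ => rfl⟩

end Lp2

section Clarkson

variable {ι E F : Type*} [AddCommGroup E] {r : ℝ} {M N : E → ℝ}

/-- Clarkson's inequality with exponent `r` for a functional `N`, which plays the role of the
`r`-th power of a norm. Phrased this way it is stable under sums. -/
def SatisfiesClarkson (r : ℝ) (N : E → ℝ) : Prop :=
  ∀ x y, N (x + y) + N (x - y) ≤ 2 ^ (r - 1) * (N x + N y)

namespace SatisfiesClarkson

theorem add (hM : SatisfiesClarkson r M) (hN : SatisfiesClarkson r N) :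
    SatisfiesClarkson r fun x => M x + N x := fun x y => by
  linarith [hM x y, hN x y]

variable [Module ℝ E] [AddCommGroup F] [Module ℝ F]

theorem comp {N : F → ℝ} (hN : SatisfiesClarkson r N) (f : E →ₗ[ℝ] F) :
    SatisfiesClarkson r fun x => N (f x) := fun x y => by
  simpa only [map_add, map_sub] using hN (f x) (f y)

theorem exists_mem_signedSums_le (hN : SatisfiesClarkson r N) {z : ι → E} {B : ℝ}
    {s : Finset ι} {k : ℕ} (hs : s.card = 2 ^ k) (hB : ∀ i ∈ s, N (z i) ≤ B) :
    ∃ y ∈ signedSums z s, N y ≤ (2 ^ (r - 1)) ^ k * B := by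
  classical
  induction k generalizing s with
  | zero =>
    obtain ⟨i, rfl⟩ := Finset.card_eq_one.mp hs
    exact ⟨z i, by simpa using sum_mem_signedSums z {i}, by simpa using hB⟩
  | succ k ih =>
    obtain ⟨t, hts, ht⟩ := Finset.exists_subset_card_eq (s := s) (n := 2 ^ k) (by lia)
    have ht' : (s \ t).card = 2 ^ k := by
      rw [Finset.card_sdiff_of_subset hts]
      lia
    obtain ⟨x, hx, hNx⟩ := ih ht fun i hi => hB i (hts hi)
    obtain ⟨y, hy, hNy⟩ := ih ht' fun i hi => hB i (Finset.sdiff_subset hi)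
    have hadd := add_mem_signedSums Finset.disjoint_sdiff hx hy
    have hsub := sub_mem_signedSums Finset.disjoint_sdiff hx hy
    rw [Finset.union_sdiff_of_subset hts] at hadd hsub
    have hsum : N (x + y) + N (x - y) ≤ 2 * ((2 ^ (r - 1)) ^ (k + 1) * B) :=
      calc N (x + y) + N (x - y) ≤ 2 ^ (r - 1) * (N x + N y) := hN x y
        _ ≤ 2 ^ (r - 1) * ((2 ^ (r - 1)) ^ k * B + (2 ^ (r - 1)) ^ k * B) := by gcongr
        _ = 2 * ((2 ^ (r - 1)) ^ (k + 1) * B) := by ring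
    rcases le_total (N (x + y)) (N (x - y)) with h | h
    · exact ⟨_, hadd, by linarith⟩
    · exact ⟨_, hsub, by linarith⟩

end SatisfiesClarkson

theorem satisfiesClarkson_norm_rpow {H : Type*} [NormedAddCommGroup H] [InnerProductSpace ℝ H]
    (hr : 2 ≤ r) : SatisfiesClarkson r fun x : H => ‖x‖ ^ r := by
  intro x y
  have hr2 : 1 ≤ r / 2 := by linarith
  have hsq (x : H) : ‖x‖ ^ r = (‖x‖ ^ 2) ^ (r / 2) := by
    rw [← Real.rpow_natCast_mul (norm_nonneg x), Nat.cast_ofNat, mul_div_cancel₀ r two_ne_zero]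
  simp only [hsq]
  calc (‖x + y‖ ^ 2) ^ (r / 2) + (‖x - y‖ ^ 2) ^ (r / 2)
      ≤ (‖x + y‖ ^ 2 + ‖x - y‖ ^ 2) ^ (r / 2) :=
        Real.add_rpow_le_rpow_add (sq_nonneg _) (sq_nonneg _) hr2
    _ = 2 ^ (r / 2) * (‖x‖ ^ 2 + ‖y‖ ^ 2) ^ (r / 2) := by
        rw [← Real.mul_rpow two_pos.le (by positivity)]
        congr 1
        linarith [parallelogram_law_with_norm ℝ x y]
    _ ≤ 2 ^ (r / 2) * (2 ^ (r / 2 - 1) * ((‖x‖ ^ 2) ^ (r / 2) + (‖y‖ ^ 2) ^ (r / 2))) := by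
        have := NNReal.rpow_add_le_mul_rpow_add_rpow (‖x‖₊ ^ 2) (‖y‖₊ ^ 2) hr2
        gcongr
        exact_mod_cast this
    _ = 2 ^ (r - 1) * ((‖x‖ ^ 2) ^ (r / 2) + (‖y‖ ^ 2) ^ (r / 2)) := by
        rw [← mul_assoc, ← Real.rpow_add two_pos]
        ring_nf

theorem satisfiesClarkson_lp_norm_rpow {G : ι → Type*} [∀ i, NormedAddCommGroup (G i)]
    {q : ℝ≥0∞} (hq : 0 < q.toReal)
    (hG : ∀ i, SatisfiesClarkson q.toReal fun x : G i => ‖x‖ ^ q.toReal) :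
    SatisfiesClarkson q.toReal fun x : lp G q => ‖x‖ ^ q.toReal := fun x y =>
  hasSum_le (fun i => hG i (x i) (y i))
    ((lp.hasSum_norm hq (x + y)).add (lp.hasSum_norm hq (x - y)))
    (((lp.hasSum_norm hq x).add (lp.hasSum_norm hq y)).mul_left _)

end Clarkson

section WeaklyNull

variable {ι E : Type*} [NormedAddCommGroup E] [NormedSpace ℝ E] {K r B : ℝ} {z : ι → E} {N : E → ℝ}

/- Unconditionality makes every signed sum of the `z i`, `i ∈ s`, have norm at least of order
`2 ^ k * ε`, while Clarkson's inequality provides one with norm `O(2 ^ (k * (1 - 1 / r)))`. -/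
theorem IsUnconditional.two_pow_mul_rpow_le (hz : IsUnconditional K z) (hr : 0 ≤ r)
    (hN : SatisfiesClarkson r N) (hnorm : ∀ x, ‖x‖ ^ r ≤ N x) (hB : ∀ i, N (z i) ≤ B)
    (f : E →L[ℝ] ℝ) {ε : ℝ} (hε : 0 < ε) {s : Finset ι} {k : ℕ} (hs : s.card = 2 ^ k)
    (hf : ∀ i ∈ s, ε ≤ |f (z i)|) : 2 ^ k * ε ^ r ≤ (‖f‖ * K) ^ r * B := by
  have hK : 0 ≤ K := by
    obtain ⟨i, hi⟩ : s.Nonempty := Finset.card_pos.mp (by simp [hs])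
    refine zero_le_one.trans (hz.one_le (i := i) fun h0 => ?_)
    exact (hε.trans_le (hf i hi)).ne' (by simp [h0])
  obtain ⟨y, hy, hNy⟩ := hN.exists_mem_signedSums_le hs fun i _ => hB i
  obtain ⟨x, hx, hfx⟩ := exists_mem_signedSums_eq_sum_abs (f : E →ₗ[ℝ] ℝ) z s
  have hle : 2 ^ k * ε ≤ ‖f‖ * K * ‖y‖ :=
    calc 2 ^ k * ε = s.card • ε := by rw [hs, nsmul_eq_mul, Nat.cast_pow, Nat.cast_ofNat]
      _ ≤ ∑ i ∈ s, |f (z i)| := s.card_nsmul_le_sum _ _ hf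
      _ = f x := hfx.symm
      _ ≤ ‖f‖ * ‖x‖ := (le_abs_self _).trans (f.le_opNorm x)
      _ ≤ ‖f‖ * (K * ‖y‖) := by gcongr; exact hz.norm_le_of_mem_signedSums hx hy
      _ = ‖f‖ * K * ‖y‖ := (mul_assoc _ _ _).symm
  have hpow : ((2 : ℝ) ^ k) ^ r = (2 ^ (r - 1)) ^ k * 2 ^ k := by
    rw [← mul_pow, ← Real.rpow_add_one two_ne_zero, sub_add_cancel,
      ← Real.rpow_natCast_mul two_pos.le, ← Real.rpow_mul_natCast two_pos.le, mul_comm]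
  refine le_of_mul_le_mul_left ?_ (show (0 : ℝ) < (2 ^ (r - 1)) ^ k by positivity)
  calc (2 ^ (r - 1)) ^ k * (2 ^ k * ε ^ r) = (2 ^ k * ε) ^ r := by
        rw [Real.mul_rpow (by positivity) hε.le, hpow, mul_assoc]
    _ ≤ (‖f‖ * K * ‖y‖) ^ r := by gcongr
    _ = (‖f‖ * K) ^ r * ‖y‖ ^ r := Real.mul_rpow (by positivity) (norm_nonneg y)
    _ ≤ (‖f‖ * K) ^ r * ((2 ^ (r - 1)) ^ k * B) := by gcongr; exact (hnorm y).trans hNy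
    _ = (2 ^ (r - 1)) ^ k * ((‖f‖ * K) ^ r * B) := mul_left_comm _ _ _

theorem IsUnconditional.tendsto_cofinite_zero (hz : IsUnconditional K z) (hr : 0 ≤ r)
    (hN : SatisfiesClarkson r N) (hnorm : ∀ x, ‖x‖ ^ r ≤ N x) (hB : ∀ i, N (z i) ≤ B)
    (f : E →L[ℝ] ℝ) : Tendsto (fun i => f (z i)) cofinite (𝓝 0) := by
  refine NormedAddGroup.tendsto_nhds_zero.mpr fun ε hε => eventually_cofinite.mpr ?_
  by_contra hinf
  obtain ⟨k, hk⟩ := pow_unbounded_of_one_lt ((‖f‖ * K) ^ r * B / ε ^ r) one_lt_two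
  obtain ⟨s, hs, hcard⟩ := Set.Infinite.exists_subset_card_eq hinf (2 ^ k)
  have hle := hz.two_pow_mul_rpow_le hr hN hnorm hB f hε hcard fun i hi => not_lt.mp (hs hi)
  exact hle.not_gt ((div_lt_iff₀ (Real.rpow_pos_of_pos hε r)).mp hk)

end WeaklyNull

section Pitt

variable {α ι H : Type*} {E : α → Type*} [∀ i, NormedAddCommGroup (E i)] {q : ℝ≥0∞}
  {l : Filter ι} {v : ι → lp E q}

theorem norm_add_rpow_sub_norm_rpow_eq_sum (hq : 0 < q.toReal) {s : Finset α} {x : lp E q}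
    (hx : ∀ i ∉ s, x i = 0) (y : lp E q) :
    ‖x + y‖ ^ q.toReal - ‖y‖ ^ q.toReal =
      ∑ i ∈ s, (‖x i + y i‖ ^ q.toReal - ‖y i‖ ^ q.toReal) :=
  ((lp.hasSum_norm hq (x + y)).sub (lp.hasSum_norm hq y)).unique <|
    hasSum_sum_of_ne_finset_zero fun i hi => by
      rw [lp.coeFn_add, Pi.add_apply, hx i hi, zero_add, sub_self]

theorem tendsto_norm_add_rpow_sub_norm_rpow (hq : 0 < q.toReal) {s : Finset α} {x : lp E q}
    (hx : ∀ i ∉ s, x i = 0) (hv : ∀ i, Tendsto (fun n => v n i) l (𝓝 0)) :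
    Tendsto (fun n => ‖x + v n‖ ^ q.toReal - ‖v n‖ ^ q.toReal) l (𝓝 (‖x‖ ^ q.toReal)) := by
  have hnorm : ‖x‖ ^ q.toReal = ∑ i ∈ s, (‖x i + 0‖ ^ q.toReal - ‖(0 : E i)‖ ^ q.toReal) := by
    simpa [Real.zero_rpow hq.ne'] using norm_add_rpow_sub_norm_rpow_eq_sum hq hx 0
  simp only [norm_add_rpow_sub_norm_rpow_eq_sum hq hx, hnorm]
  refine tendsto_finsetSum s fun i _ => .sub ?_ ?_
  · exact (tendsto_const_nhds.add (hv i)).norm.rpow_const (.inr hq.le)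
  · exact (hv i).norm.rpow_const (.inr hq.le)

variable [∀ i, NormedSpace ℝ (E i)] [Fact (1 ≤ q)] [NormedAddCommGroup H] [InnerProductSpace ℝ H]
  {C c : ℝ}

theorem le_sq_opNorm_mul_of_frequently_le (hq : 0 < q.toReal) (T : lp E q →L[ℝ] H)
    (hv : ∀ i, Tendsto (fun n => v n i) l (𝓝 0)) (hC : ∀ n, ‖v n‖ ≤ C) {s : Finset α} {x : lp E q}
    (hx : ∀ i ∉ s, x i = 0) (hc : ∃ᶠ n in l, c ≤ ‖T (x + v n)‖ ^ 2) :
    c ≤ (‖T‖ * (‖x‖ ^ q.toReal + C ^ q.toReal) ^ q.toReal⁻¹) ^ 2 := by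
  have hlim := (tendsto_norm_add_rpow_sub_norm_rpow hq hx hv).add_const (C ^ q.toReal)
  have hlim := ((hlim.rpow_const (.inr (inv_nonneg.mpr hq.le))).const_mul ‖T‖).pow 2
  refine ge_of_tendsto_of_frequently hlim (hc.mono fun n hn => hn.trans ?_)
  have hle : ‖v n‖ ^ q.toReal ≤ C ^ q.toReal := by
    gcongr
    exact hC n
  gcongr
  refine T.le_opNorm_of_le ?_
  have hpos : 0 ≤ ‖x + v n‖ ^ q.toReal := by positivity
  rw [Real.le_rpow_inv_iff_of_pos (norm_nonneg _) (by linarith) hq]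
  linarith

theorem norm_sq_add_sq_le_of_frequently_of_finite_support (hq : 0 < q.toReal) (T : lp E q →L[ℝ] H)
    (hv : ∀ i, Tendsto (fun n => v n i) l (𝓝 0)) (hC : ∀ n, ‖v n‖ ≤ C) (hc : 0 ≤ c)
    (hfreq : ∃ᶠ n in l, c ≤ ‖T (v n)‖) {s : Finset α} {x : lp E q} (hx : ∀ i ∉ s, x i = 0) :
    ‖T x‖ ^ 2 + c ^ 2 ≤ (‖T‖ * (‖x‖ ^ q.toReal + C ^ q.toReal) ^ q.toReal⁻¹) ^ 2 := by
  have hor : ∃ᶠ n in l, ‖T x‖ ^ 2 + c ^ 2 ≤ ‖T (x + v n)‖ ^ 2 ∨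
      ‖T x‖ ^ 2 + c ^ 2 ≤ ‖T (x + -v n)‖ ^ 2 := by
    refine hfreq.mono fun n hn => ?_
    have hle : ‖T x‖ ^ 2 + c ^ 2 ≤ ‖T x‖ ^ 2 + ‖T (v n)‖ ^ 2 := by gcongr
    rw [← sub_eq_add_neg, map_add, map_sub]
    exact (norm_sq_add_norm_sq_le_or (T x) (T (v n))).imp hle.trans hle.trans
  rcases frequently_or_distrib.mp hor with h | h
  · exact le_sq_opNorm_mul_of_frequently_le hq T hv hC hx h
  · exact le_sq_opNorm_mul_of_frequently_le hq T (fun i => by simpa using (hv i).neg)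
      (fun n => by simpa using hC n) hx h

theorem norm_sq_add_sq_le_of_frequently (hq : 0 < q.toReal) (hq' : q ≠ ∞) (T : lp E q →L[ℝ] H)
    (hv : ∀ i, Tendsto (fun n => v n i) l (𝓝 0)) (hC : ∀ n, ‖v n‖ ≤ C) (hc : 0 ≤ c)
    (hfreq : ∃ᶠ n in l, c ≤ ‖T (v n)‖) (x : lp E q) :
    ‖T x‖ ^ 2 + c ^ 2 ≤ (‖T‖ * (‖x‖ ^ q.toReal + C ^ q.toReal) ^ q.toReal⁻¹) ^ 2 := by
  classical
  have hsum : Tendsto (fun s : Finset α => ∑ i ∈ s, lp.single q i (x i)) atTop (𝓝 x) :=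
    lp.hasSum_single hq' x
  have hleft : Continuous fun y : lp E q => ‖T y‖ ^ 2 + c ^ 2 := by fun_prop
  have hright : Continuous fun y : lp E q =>
      (‖T‖ * (‖y‖ ^ q.toReal + C ^ q.toReal) ^ q.toReal⁻¹) ^ 2 := by
    have := hq.le
    have := inv_nonneg.mpr hq.le
    fun_prop (disch := simp [*])
  refine le_of_tendsto_of_tendsto' ((hleft.tendsto x).comp hsum)
    ((hright.tendsto x).comp hsum) fun s => ?_
  refine norm_sq_add_sq_le_of_frequently_of_finite_support hq T hv hC hc hfreq (s := s)
    fun i hi => ?_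
  rw [lp.coeFn_sum, Finset.sum_apply]
  exact Finset.sum_eq_zero fun j hj => lp.single_apply_ne _ _ _ (ne_of_mem_of_not_mem hj hi).symm

/- Since `T x` and `T (v n)` are almost orthogonal up to the choice of a sign, while
`‖x ± v n‖ ^ q` is asymptotically at most `‖x‖ ^ q + C ^ q`, an `x` at which `T` almost attains its
norm leaves no room for `‖T (v n)‖` to be large (Delpech's proof of Pitt's theorem). -/
theorem sq_le_opNorm_sq_mul_rpow (hq : 2 ≤ q.toReal) (hq' : q ≠ ∞) (T : lp E q →L[ℝ] H)
    (hv : ∀ i, Tendsto (fun n => v n i) l (𝓝 0)) (hC : ∀ n, ‖v n‖ ≤ C) (hc : 0 ≤ c)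
    (hfreq : ∃ᶠ n in l, c ≤ ‖T (v n)‖) : c ^ 2 ≤ ‖T‖ ^ 2 * C ^ q.toReal := by
  have hq0 : 0 < q.toReal := by linarith
  have hCq : 0 ≤ C ^ q.toReal := by
    obtain ⟨n, -⟩ := hfreq.exists
    have := (norm_nonneg _).trans (hC n)
    positivity
  have hroot {x : lp E q} (hx : ‖x‖ ≤ 1) :
      (‖x‖ ^ q.toReal + C ^ q.toReal) ^ q.toReal⁻¹ ≤ √(1 + C ^ q.toReal) :=
    calc (‖x‖ ^ q.toReal + C ^ q.toReal) ^ q.toReal⁻¹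
        ≤ (1 + C ^ q.toReal) ^ q.toReal⁻¹ := by
          gcongr
          exact Real.rpow_le_one (norm_nonneg x) hx hq0.le
      _ ≤ (1 + C ^ q.toReal) ^ (1 / 2 : ℝ) := by
          rw [one_div]
          gcongr
          linarith
      _ = √(1 + C ^ q.toReal) := (Real.sqrt_eq_rpow _).symm
  have hball (x : lp E q) (hx : ‖x‖ ≤ 1) : ‖T x‖ ^ 2 + c ^ 2 ≤ ‖T‖ ^ 2 * (1 + C ^ q.toReal) :=
    calc ‖T x‖ ^ 2 + c ^ 2 ≤ (‖T‖ * (‖x‖ ^ q.toReal + C ^ q.toReal) ^ q.toReal⁻¹) ^ 2 :=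
          norm_sq_add_sq_le_of_frequently hq0 hq' T hv hC hc hfreq x
      _ ≤ (‖T‖ * √(1 + C ^ q.toReal)) ^ 2 := by
          gcongr
          exact hroot hx
      _ = ‖T‖ ^ 2 * (1 + C ^ q.toReal) := by rw [mul_pow, Real.sq_sqrt (by positivity)]
  have hnorm : ‖T‖ ≤ √(‖T‖ ^ 2 * (1 + C ^ q.toReal) - c ^ 2) :=
    T.opNorm_le_of_unit_norm (Real.sqrt_nonneg _) fun x hx =>
      Real.le_sqrt_of_sq_le (by linarith [hball x hx.le])
  have h0 := hball 0 (by simp)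
  rw [Real.le_sqrt (norm_nonneg _) (by linarith [sq_nonneg ‖T 0‖])] at hnorm
  linarith

theorem tendsto_clm_zero_of_tendsto_coord_zero (hq : 2 < q.toReal) (hq' : q ≠ ∞)
    (T : lp E q →L[ℝ] H) (hv : ∀ i, Tendsto (fun n => v n i) l (𝓝 0)) (hC : ∀ n, ‖v n‖ ≤ C) :
    Tendsto (fun n => T (v n)) l (𝓝 0) := by
  refine NormedAddGroup.tendsto_nhds_zero.mpr fun ε hε => ?_
  by_contra hfreq
  have hfreq : ∃ᶠ n in l, ε ≤ ‖T (v n)‖ := by simpa only [not_eventually, not_lt] using hfreq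
  have hC0 : 0 ≤ C := by
    obtain ⟨n, -⟩ := hfreq.exists
    exact (norm_nonneg _).trans (hC n)
  have hscale (t : ℝ) (ht : 0 < t) : ε ^ 2 ≤ ‖T‖ ^ 2 * C ^ q.toReal * t ^ (q.toReal - 2) := by
    have := sq_le_opNorm_sq_mul_rpow (v := fun n => t • v n) (C := t * C) (c := t * ε) hq.le hq' T
      (fun i => by simpa using (hv i).const_smul t)
      (fun n => by rw [norm_smul, Real.norm_of_nonneg ht.le]; gcongr; exact hC n) (by positivity)
      (hfreq.mono fun n hn => by
        rw [map_smul, norm_smul, Real.norm_of_nonneg ht.le]; gcongr)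
    rw [Real.mul_rpow ht.le hC0, mul_pow] at this
    refine le_of_mul_le_mul_left (this.trans_eq ?_) (pow_pos ht 2)
    rw [Real.rpow_sub ht, Real.rpow_two]
    field_simp
  have hlim : Tendsto (fun t : ℝ => ‖T‖ ^ 2 * C ^ q.toReal * t ^ (q.toReal - 2)) (𝓝[>] 0)
      (𝓝 (‖T‖ ^ 2 * C ^ q.toReal * 0 ^ (q.toReal - 2))) :=
    ((Real.continuousAt_rpow_const 0 _ (.inr (by linarith))).tendsto.mono_left
      nhdsWithin_le_nhds).const_mul _
  have := ge_of_tendsto hlim (eventually_mem_nhdsWithin.mono hscale)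
  rw [Real.zero_rpow (by linarith), mul_zero] at this
  exact this.not_gt (by positivity)

end Pitt

section Projection

variable {ι E H : Type*} [NormedAddCommGroup E] [NormedSpace ℝ E] [NormedAddCommGroup H]
  [InnerProductSpace ℝ H] {l : Filter ι} {K : ℝ} {z : ι → E}

theorem IsUnconditional.exists_dual_clm (hz : IsUnconditional K z) (hz1 : ∀ i, ‖z i‖ = 1)
    (J : E →L[ℝ] H) {P : E →L[ℝ] E}
    (hP : ∀ x, P x ∈ (Submodule.span ℝ (Set.range z)).topologicalClosure) :
    ∃ (g : ι → E →L[ℝ] ℝ) (T : E →L[ℝ] lp (fun _ : ι => ℝ) 2), (∀ i, g i (z i) = 1) ∧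
      (∀ i, ‖g i‖ ≤ K) ∧ ∀ x i, T x i = g i (P x) * ‖J (z i)‖ := by
  choose g hg hg' hgK using hz.exists_dual hz1
  rcases isEmpty_or_nonempty ι with hι | ⟨⟨i⟩⟩
  · exact ⟨g, 0, hg, hgK, fun _ => isEmptyElim⟩
  have hK : 0 ≤ K := (norm_nonneg _).trans (hgK i)
  have hbessel (x : E) (s : Finset ι) :
      ∑ i ∈ s, (‖J (z i)‖ • (g i).comp P) x ^ 2 ≤ (‖J‖ * K * ‖P‖ * ‖x‖) ^ 2 :=
    calc ∑ i ∈ s, (‖J (z i)‖ • (g i).comp P) x ^ 2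
        = ∑ i ∈ s, (g i (P x) * ‖J (z i)‖) ^ 2 := by simp [mul_comm]
      _ ≤ (‖J‖ * K * ‖P x‖) ^ 2 := hz.sum_dual_sq_mul_norm_sq_le J hg hg' s (hP x)
      _ ≤ (‖J‖ * K * ‖P‖ * ‖x‖) ^ 2 := by
        rw [mul_assoc _ ‖P‖]
        gcongr
        exact P.le_opNorm x
  obtain ⟨T, hT⟩ := exists_clm_lp_two (by positivity) hbessel
  exact ⟨g, T, hg, hgK, fun x i => by simp [hT, mul_comm]⟩

theorem IsUnconditional.le_mul_opNorm_mul_of_tendsto [l.NeBot] (hz : IsUnconditional K z)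
    (hz1 : ∀ i, ‖z i‖ = 1) {J : E →L[ℝ] H} {b : ℝ} (hJ : Tendsto (fun i => ‖J (z i)‖) l (𝓝 b))
    (hb : 0 < b) {P : E →L[ℝ] E}
    (hP : ∀ x, P x ∈ (Submodule.span ℝ (Set.range z)).topologicalClosure)
    (hPz : ∀ i, P (z i) = z i) {γ : ℝ} {u v : ι → E} (huv : ∀ i, u i + v i = z i)
    (hu : ∀ i, γ * ‖u i‖ ≤ ‖J (u i)‖) (hJv : Tendsto (fun i => J (v i)) l (𝓝 0))
    (hv : ∀ T : E →L[ℝ] lp (fun _ : ι => ℝ) 2, Tendsto (fun i => T (v i)) l (𝓝 0)) :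
    γ ≤ K * ‖P‖ * b := by
  obtain ⟨g, T, hg, hgK, hT⟩ := hz.exists_dual_clm hz1 J hP
  obtain ⟨i⟩ : Nonempty ι := l.nonempty_of_neBot
  have hK : 0 ≤ K := (norm_nonneg _).trans (hgK i)
  rcases le_or_gt γ 0 with hγ | hγ
  · exact hγ.trans (by positivity)
  have hTv (i : ι) : |g i (P (v i))| * ‖J (z i)‖ ≤ ‖T (v i)‖ := by
    simpa [hT] using lp.norm_apply_le_norm two_ne_zero (T (v i)) i
  have hgu (i : ι) : γ * |g i (P (u i))| ≤ K * ‖P‖ * (‖J (z i)‖ + ‖J (v i)‖) :=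
    calc γ * |g i (P (u i))| ≤ γ * (K * (‖P‖ * ‖u i‖)) := by
          gcongr
          exact (g i).le_of_opNorm_le_of_le (hgK i) (P.le_opNorm _)
      _ = K * ‖P‖ * (γ * ‖u i‖) := by ring
      _ ≤ K * ‖P‖ * (‖J (z i)‖ + ‖J (v i)‖) := by
          gcongr
          refine (hu i).trans ?_
          rw [eq_sub_of_add_eq (huv i), map_sub]
          exact norm_sub_le _ _
  have hone (i : ι) : 1 ≤ |g i (P (u i))| + |g i (P (v i))| := by
    refine le_trans ?_ (abs_add_le _ _)
    rw [← map_add, ← map_add, huv, hPz, hg, abs_one]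
  have hmain (i : ι) : γ * ‖J (z i)‖ ≤
      K * ‖P‖ * (‖J (z i)‖ + ‖J (v i)‖) * ‖J (z i)‖ + γ * ‖T (v i)‖ :=
    calc γ * ‖J (z i)‖ ≤ γ * ((|g i (P (u i))| + |g i (P (v i))|) * ‖J (z i)‖) := by
          gcongr
          exact le_mul_of_one_le_left (norm_nonneg _) (hone i)
      _ = γ * |g i (P (u i))| * ‖J (z i)‖ + γ * (|g i (P (v i))| * ‖J (z i)‖) := by ring
      _ ≤ _ := add_le_add (mul_le_mul_of_nonneg_right (hgu i) (norm_nonneg _))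
          (mul_le_mul_of_nonneg_left (hTv i) hγ.le)
  have hlim := le_of_tendsto_of_tendsto' (hJ.const_mul γ)
    ((((hJ.add hJv.norm).const_mul (K * ‖P‖)).mul hJ).add ((hv T).norm.const_mul γ)) hmain
  rw [norm_zero, norm_zero, add_zero, mul_zero, add_zero] at hlim
  exact le_of_mul_le_mul_right hlim hb

end Projection

section Submodule

variable {E : Type*} [NormedAddCommGroup E] [NormedSpace ℝ E] {U W : Submodule ℝ E}

theorem mem_topologicalClosure_span_range_of_coe {ι : Type*} {z : ι → U} {y : U}
    (hy : (y : E) ∈ (Submodule.span ℝ (Set.range fun i => (z i : E))).topologicalClosure) :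
    y ∈ (Submodule.span ℝ (Set.range z)).topologicalClosure := by
  have himage : (Submodule.span ℝ (Set.range fun i => (z i : E)) : Set E) =
      Subtype.val '' (Submodule.span ℝ (Set.range z) : Set U) := by
    rw [← U.coe_subtype, ← Submodule.map_coe, Submodule.map_span, ← Set.range_comp]
    rfl
  exact closure_subtype.mpr (himage ▸ hy)

theorem exists_clm_add_eq_of_disjoint [CompleteSpace U] [CompleteSpace W]
    [CompleteSpace ↥(U ⊔ W)] (hdisj : Disjoint U W) :
    ∃ (A : ↥(U ⊔ W) →L[ℝ] U) (B : ↥(U ⊔ W) →L[ℝ] W), ∀ x, (A x : E) + B x = x := by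
  let f : U × W →L[ℝ] ↥(U ⊔ W) := (U.subtypeL.coprod W.subtypeL).codRestrict (U ⊔ W) fun x =>
    Submodule.add_mem_sup x.1.2 x.2.2
  have hker : f.ker = ⊥ := by
    refine LinearMap.ker_eq_bot'.mpr fun ⟨u, v⟩ huv => ?_
    have hsum : (u : E) + v = 0 := congrArg Subtype.val huv
    have hu : (u : E) = 0 := Submodule.disjoint_def.mp hdisj u u.2
      (eq_neg_of_add_eq_zero_left hsum ▸ W.neg_mem v.2)
    rw [hu, zero_add] at hsum
    exact Prod.ext (Subtype.ext hu) (Subtype.ext hsum)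
  have hrange : f.range = ⊤ := by
    refine LinearMap.range_eq_top.mpr fun ⟨x, hx⟩ => ?_
    obtain ⟨u, hu, v, hv, rfl⟩ := Submodule.mem_sup.mp hx
    exact ⟨(⟨u, hu⟩, ⟨v, hv⟩), rfl⟩
  let e := ContinuousLinearEquiv.ofBijective f hker hrange
  refine ⟨.comp (.fst ℝ U W) (e.symm : ↥(U ⊔ W) →L[ℝ] U × W),
    .comp (.snd ℝ U W) (e.symm : ↥(U ⊔ W) →L[ℝ] U × W), fun x => ?_⟩
  exact congrArg Subtype.val (e.apply_symm_apply x)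

end Submodule

section Xpw

theorem nrmP_nonneg (x : Xpw p w) : 0 ≤ nrmP x := lp.norm_nonneg' _

theorem nrm2_nonneg (x : Xpw p w) : 0 ≤ nrm2 x := norm_nonneg _

theorem ratio_nonneg (x : Xpw p w) : 0 ≤ ratio x :=
  div_nonneg (nrm2_nonneg x) (nrmP_nonneg x)

variable [Fact (1 ≤ ENNReal.ofReal p)] {K : ℝ}

theorem norm_eq_max (x : Xpw p w) : ‖x‖ = max (nrmP x) (nrm2 x) := rfl

theorem isClosed_XpwMod (p : ℝ) [Fact (1 ≤ ENNReal.ofReal p)] (w : ℕ → ℝ) :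
    IsClosed (XpwMod p w : Set (SeqP p × Seq2)) := by
  have hcoord : (XpwMod p w : Set (SeqP p × Seq2)) = ⋂ n, {x | x.2 n = w n * x.1 n} :=
    Set.ext fun x => (Set.mem_iInter (s := fun n => {x : SeqP p × Seq2 | x.2 n = w n * x.1 n})).symm
  rw [hcoord]
  exact isClosed_iInter fun n => isClosed_eq
    ((lp.lipschitzWith_one_eval 2 n).continuous.comp continuous_snd)
    (((lp.lipschitzWith_one_eval _ n).continuous.comp continuous_fst).const_mul _)

instance : CompleteSpace (Xpw p w) :=
  (isClosed_XpwMod p w).completeSpace_coe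

/-- The contraction of `X_{p,w}` into `ℓ_p` that realizes `|x|_p` as a norm. -/
def toSeqP : Xpw p w →L[ℝ] SeqP p :=
  (ContinuousLinearMap.fst ℝ (SeqP p) Seq2).comp (XpwMod p w).subtypeL

/-- The contraction `x ↦ (w_n x_n)` of `X_{p,w}` into `ℓ_2` that realizes `|x|_2` as a norm. -/
def toSeq2 : Xpw p w →L[ℝ] Seq2 :=
  (ContinuousLinearMap.snd ℝ (SeqP p) Seq2).comp (XpwMod p w).subtypeL

theorem norm_toSeqP (x : Xpw p w) : ‖toSeqP x‖ = nrmP x := rfl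

theorem norm_toSeq2 (x : Xpw p w) : ‖toSeq2 x‖ = nrm2 x := rfl

theorem nrmP_smul (c : ℝ) (x : Xpw p w) : nrmP (c • x) = |c| * nrmP x := by
  rw [← norm_toSeqP, map_smul, norm_smul, norm_toSeqP, Real.norm_eq_abs]

theorem nrm2_smul (c : ℝ) (x : Xpw p w) : nrm2 (c • x) = |c| * nrm2 x := by
  rw [← norm_toSeq2, map_smul, norm_smul, norm_toSeq2, Real.norm_eq_abs]

theorem ratio_smul {c : ℝ} (hc : c ≠ 0) (x : Xpw p w) : ratio (c • x) = ratio x := by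
  rw [ratio, nrm2_smul, nrmP_smul, mul_div_mul_left _ _ (abs_ne_zero.mpr hc), ratio]

theorem restrict_smul (s : Set ℕ) (c : ℝ) (x : Xpw p w) :
    restrict s (c • x) = c • restrict s x :=
  Subtype.ext (Prod.ext (Subtype.ext (s.indicator_const_smul c _))
    (Subtype.ext (s.indicator_const_smul c _)))

theorem nrmP_pos {x : Xpw p w} (hx : x ≠ 0) : 0 < nrmP x := by
  refine (nrmP_nonneg x).lt_of_ne' fun h => hx ?_
  have h1 : x.pair.1 = 0 := norm_eq_zero.mp h
  have h2 (n : ℕ) : x.pair.2 n = w n * x.pair.1 n := Subtype.property (p := (· ∈ XpwMod p w)) x n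
  refine Subtype.ext (Prod.ext h1 (lp.ext (funext fun n => (h2 n).trans ?_)))
  rw [h1]
  exact mul_zero _

theorem nrm2_eq_norm_mul_min (x : Xpw p w) : nrm2 x = ‖x‖ * min 1 (ratio x) := by
  rcases eq_or_ne x 0 with rfl | hx
  · rw [norm_zero, zero_mul, ← norm_toSeq2, map_zero, norm_zero]
  have hpos := nrmP_pos hx
  have hmul : nrmP x * ratio x = nrm2 x := mul_div_cancel₀ _ hpos.ne'
  rcases le_total (nrm2 x) (nrmP x) with h | h
  · have hratio : ratio x ≤ 1 := (div_le_one hpos).mpr h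
    rw [norm_eq_max, max_eq_left h, min_eq_right hratio, hmul]
  · have hratio : 1 ≤ ratio x := (one_le_div hpos).mpr h
    rw [norm_eq_max, max_eq_right h, min_eq_left hratio, mul_one]

theorem tendsto_nrm2_of_tendsto_ratio {z : ℕ → Xpw p w} (hz1 : ∀ n, ‖z n‖ = 1) {β : ℝ}
    (hβ : Tendsto (fun n => ratio (z n)) atTop (𝓝 β)) :
    Tendsto (fun n => nrm2 (z n)) atTop (𝓝 (min 1 β)) := by
  simpa only [nrm2_eq_norm_mul_min, hz1, one_mul] using tendsto_const_nhds.min hβ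

theorem sInf_ratio_le {U : Submodule ℝ (Xpw p w)} {u : Xpw p w} (hu : u ∈ U) (hu0 : u ≠ 0)
    (s : Set ℕ) :
    sInf {b : ℝ | ∀ ε : ℝ, 0 < ε → ∃ u : Xpw p w, u ∈ U ∧ u ≠ 0 ∧ ‖restrict s u‖ < ε ∧
      ratio u ≤ b} ≤ ratio u := by
  refine csInf_le ⟨0, fun b hb => ?_⟩ fun ε hε => ?_
  · obtain ⟨v, -, -, -, hv⟩ := hb 1 one_pos
    exact (ratio_nonneg v).trans hv
  · obtain ⟨c, hc, hcε⟩ := exists_pos_mul_lt hε ‖restrict s u‖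
    refine ⟨c • u, U.smul_mem c hu, smul_ne_zero hc.ne' hu0, ?_, (ratio_smul hc.ne' u).le⟩
    rwa [restrict_smul, norm_smul, Real.norm_of_nonneg hc.le, mul_comm]

theorem mul_norm_le_nrm2 {x : Xpw p w} {γ : ℝ} (hγ : γ ≤ 1) (hx : x ≠ 0 → γ ≤ ratio x) :
    γ * ‖x‖ ≤ nrm2 x := by
  rcases eq_or_ne x 0 with rfl | hx0
  · rw [norm_zero, mul_zero]
    exact nrm2_nonneg 0
  · rw [nrm2_eq_norm_mul_min, mul_comm]
    exact mul_le_mul_of_nonneg_left (le_min hγ (hx hx0)) (norm_nonneg x)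

theorem satisfiesClarkson_Xpw (hp : 2 ≤ p) :
    SatisfiesClarkson p fun x : Xpw p w => nrmP x ^ p + nrm2 x ^ p := by
  have hreal : SatisfiesClarkson p fun x : ℝ => ‖x‖ ^ p := satisfiesClarkson_norm_rpow hp
  have hlp : SatisfiesClarkson p fun x : SeqP p => ‖x‖ ^ p := by
    have hp0 : (ENNReal.ofReal p).toReal = p := ENNReal.toReal_ofReal (zero_le_two.trans hp)
    have := satisfiesClarkson_lp_norm_rpow (G := fun _ : ℕ => ℝ) (q := ENNReal.ofReal p)
    rw [hp0] at this
    exact this (by linarith) fun _ => hreal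
  exact (hlp.comp (toSeqP (w := w)).toLinearMap).add
    ((satisfiesClarkson_norm_rpow hp).comp (toSeq2 (p := p) (w := w)).toLinearMap)

variable {E H : Type*} [NormedAddCommGroup E] [NormedSpace ℝ E] [NormedAddCommGroup H]
  [InnerProductSpace ℝ H] {z : ℕ → E}

theorem IsUnconditional.tendsto_zero_of_linearIsometry (hp : 2 ≤ p) (i : E →ₗᵢ[ℝ] Xpw p w)
    (hz : IsUnconditional K z) (hz1 : ∀ n, ‖z n‖ = 1) (f : E →L[ℝ] ℝ) :
    Tendsto (fun n => f (z n)) atTop (𝓝 0) := by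
  have hp0 : 0 ≤ p := zero_le_two.trans hp
  have hle (x : Xpw p w) : ‖x‖ ^ p ≤ nrmP x ^ p + nrm2 x ^ p := by
    rw [norm_eq_max]
    rcases max_choice (nrmP x) (nrm2 x) with h | h <;> rw [h]
    · exact le_add_of_nonneg_right (Real.rpow_nonneg (nrm2_nonneg x) p)
    · exact le_add_of_nonneg_left (Real.rpow_nonneg (nrmP_nonneg x) p)
  have hle_two (n : ℕ) : nrmP (i (z n)) ^ p + nrm2 (i (z n)) ^ p ≤ 2 := by
    have hnorm : max (nrmP (i (z n))) (nrm2 (i (z n))) = 1 := (i.norm_map _).trans (hz1 n)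
    linarith [Real.rpow_le_one (nrmP_nonneg _) ((le_max_left _ _).trans_eq hnorm) hp0,
      Real.rpow_le_one (nrm2_nonneg _) ((le_max_right _ _).trans_eq hnorm) hp0]
  rw [← Nat.cofinite_eq_atTop]
  exact hz.tendsto_cofinite_zero hp0 ((satisfiesClarkson_Xpw hp).comp i.toLinearMap)
    (fun x => (congrArg (· ^ p) (i.norm_map x)).symm.trans_le (hle (i x))) hle_two f

theorem IsUnconditional.tendsto_clm_comp_zero (hp : 2 < p) (i : E →ₗᵢ[ℝ] Xpw p w)
    (hz : IsUnconditional K z) (hz1 : ∀ n, ‖z n‖ = 1) (L : E →L[ℝ] SeqP p)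
    (T : SeqP p →L[ℝ] H) : Tendsto (fun n => T (L (z n))) atTop (𝓝 0) := by
  have hp0 : (ENNReal.ofReal p).toReal = p := ENNReal.toReal_ofReal (by linarith)
  refine tendsto_clm_zero_of_tendsto_coord_zero (hp0.symm ▸ hp) ENNReal.ofReal_ne_top T
    (fun k => hz.tendsto_zero_of_linearIsometry hp.le i hz1
      ((lp.evalCLM ℝ (fun _ : ℕ => ℝ) (ENNReal.ofReal p) k).comp L)) (C := ‖L‖) fun n => ?_
  simpa only [hz1, mul_one] using L.le_opNorm (z n)

theorem stmt10_general (hp : 2 < p) {Z X U W : Submodule ℝ (Xpw p w)}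
    (hXcl : IsClosed (X : Set (Xpw p w))) (hUcl : IsClosed (U : Set (Xpw p w))) (hZX : Z ≤ X)
    (hXUW : X = U ⊔ W) (hUW : Disjoint U W) (hWp : Nonempty (W ≃L[ℝ] SeqP p))
    {z : ℕ → Xpw p w} (hz1 : ∀ n, ‖z n‖ = 1)
    (hzspan : Z = (Submodule.span ℝ (Set.range z)).topologicalClosure)
    (hK : IsUnconditional K z) {β : ℝ} (hβ : Tendsto (fun n => ratio (z n)) atTop (𝓝 β))
    (hβ0 : 0 < β) {β' : ℝ}
    (hβ' : Tendsto (fun n : ℕ => sInf {b : ℝ | ∀ ε : ℝ, 0 < ε →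
        ∃ u : Xpw p w, u ∈ U ∧ u ≠ 0 ∧ ‖restrict {k : ℕ | k < n} u‖ < ε ∧ ratio u ≤ b})
      atTop (𝓝 β'))
    (hβ'1 : β' ≤ 1) (P : X →L[ℝ] X) (hPZ : ∀ x, (P x : Xpw p w) ∈ Z)
    (hPid : ∀ x : X, (x : Xpw p w) ∈ Z → P x = x) : β' / (K * β) ≤ ‖P‖ := by
  subst hXUW
  obtain ⟨φ⟩ := hWp
  have := hXcl.completeSpace_coe
  have := hUcl.completeSpace_coe
  have : CompleteSpace W :=
    (completeSpace_congr (e := φ.toEquiv) φ.isUniformEmbedding).mpr inferInstance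
  obtain ⟨A, B, hAB⟩ := exists_clm_add_eq_of_disjoint hUW
  have hzZ (n : ℕ) : z n ∈ Z :=
    hzspan ▸ Submodule.le_topologicalClosure _ (Submodule.subset_span (Set.mem_range_self n))
  let x (n : ℕ) : ↥(U ⊔ W) := ⟨z n, hZX (hzZ n)⟩
  have hx : IsUnconditional K x := .of_comp_linearIsometry (U ⊔ W).subtypeₗᵢ hK
  let inclW : W →L[ℝ] ↥(U ⊔ W) := W.subtypeL.codRestrict (U ⊔ W) fun y =>
    Submodule.mem_sup_right y.2
  have hsmall {H : Type} [NormedAddCommGroup H] [InnerProductSpace ℝ H] (T : ↥(U ⊔ W) →L[ℝ] H) :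
      Tendsto (fun n => T (inclW (B (x n)))) atTop (𝓝 0) := by
    simpa using hx.tendsto_clm_comp_zero hp (U ⊔ W).subtypeₗᵢ hz1 (φ.toContinuousLinearMap.comp B)
      ((T.comp inclW).comp φ.symm.toContinuousLinearMap)
  have hU (u : Xpw p w) (hu : u ∈ U) : β' * ‖u‖ ≤ nrm2 u :=
    mul_norm_le_nrm2 hβ'1 fun hu0 => le_of_tendsto' hβ' fun n => sInf_ratio_le hu hu0 _
  have hmain : β' ≤ K * ‖P‖ * min 1 β :=
    hx.le_mul_opNorm_mul_of_tendsto hz1 (J := toSeq2.comp (U ⊔ W).subtypeL)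
      (tendsto_nrm2_of_tendsto_ratio hz1 hβ) (lt_min one_pos hβ0)
      (fun y => mem_topologicalClosure_span_range_of_coe (hzspan ▸ hPZ y))
      (fun n => hPid _ (hzZ n)) (u := fun n => Submodule.inclusion le_sup_left (A (x n)))
      (v := fun n => inclW (B (x n))) (fun n => Subtype.ext (hAB (x n)))
      (fun n => hU _ (A (x n)).2) (hsmall _) hsmall
  have hK0 : 0 < K :=
    one_pos.trans_le (hK.one_le (i := 0) (norm_ne_zero_iff.mp ((hz1 0).trans_ne one_ne_zero)))
  rw [div_le_iff₀ (mul_pos hK0 hβ0)]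
  calc β' ≤ K * ‖P‖ * min 1 β := hmain
    _ ≤ K * ‖P‖ * β := by gcongr; exact min_le_right 1 β
    _ = ‖P‖ * (K * β) := by ring

end Xpw

open Filter in
/-- Proposition 2.1: suppose `Z ⊆ X = U ⊕ W` are closed infinite
dimensional subspaces of `X_p`, with `U` isomorphic to `ℓ_2` and `W` isomorphic to
`ℓ_p`; suppose `Z` has a normalized `K`-unconditional basis `(z_n)`, let
`β = lim r(z_n) > 0` and let `β' ≤ 1` be the limit of
`inf {b : ∀ ε > 0 ∃ u ∈ U, ‖P_n u‖ < ε and r(u) ≤ b}`.  Then every bounded projection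
`P` from `X` onto `Z` has `‖P‖ ≥ β'/(Kβ)`. -/
theorem stmt10 (p : ℝ) (hp : 2 < p) [Fact (1 ≤ ENNReal.ofReal p)]
    (w : ℕ → ℝ) (hw : IsXpWeight p w)
    (Z X U W : Submodule ℝ (Xpw p w))
    (hZcl : IsClosed (Z : Set (Xpw p w))) (hXcl : IsClosed (X : Set (Xpw p w)))
    (hUcl : IsClosed (U : Set (Xpw p w))) (hWcl : IsClosed (W : Set (Xpw p w)))
    (hZinf : ¬ FiniteDimensional ℝ ↥Z) (hXinf : ¬ FiniteDimensional ℝ ↥X)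
    (hUinf : ¬ FiniteDimensional ℝ ↥U) (hWinf : ¬ FiniteDimensional ℝ ↥W)
    (hZX : Z ≤ X) (hXUW : X = U ⊔ W) (hUWdisj : U ⊓ W = ⊥)
    (hU2 : Nonempty (↥U ≃L[ℝ] Seq2)) (hWp : Nonempty (↥W ≃L[ℝ] SeqP p))
    (z : ℕ → Xpw p w) (hzZ : ∀ n, z n ∈ Z) (hz1 : ∀ n, ‖z n‖ = 1)
    (hzspan : Z = (Submodule.span ℝ (Set.range z)).topologicalClosure)
    (K : ℝ)
    (hK : ∀ a θ : ℕ → ℝ, (∀ n, θ n = 1 ∨ θ n = -1) → ∀ s : Finset ℕ,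
      ‖∑ n ∈ s, (θ n * a n) • z n‖ ≤ K * ‖∑ n ∈ s, a n • z n‖)
    (β : ℝ) (hβ : Tendsto (fun n => ratio (z n)) atTop (nhds β)) (hβ0 : 0 < β)
    (β' : ℝ)
    (hβ' : Tendsto (fun n : ℕ => sInf {b : ℝ | ∀ ε : ℝ, 0 < ε →
        ∃ u : Xpw p w, u ∈ U ∧ u ≠ 0 ∧ ‖restrict {k : ℕ | k < n} u‖ < ε ∧ ratio u ≤ b})
      atTop (nhds β'))
    (hβ'1 : β' ≤ 1)
    (P : ↥X →L[ℝ] ↥X)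
    (hPZ : ∀ x : ↥X, (P x : Xpw p w) ∈ Z)
    (hPid : ∀ x : ↥X, (x : Xpw p w) ∈ Z → P x = x) :
    ‖P‖ ≥ β' / (K * β) :=
  stmt10_general hp hXcl hUcl hZX hXUW (disjoint_iff.mpr hUWdisj) hWp hz1 hzspan hK hβ hβ0 hβ'
    hβ'1 P hPZ hPid
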